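/- arXiv:1809.02947 — 2 statements merged into one kernel-verified Lean document; each statement's English description precedes it below -/
import Mathlib

section
/- Let m, n be integers with gcd(m,n) = 1 and m ≠ n, and let c ≥ 1. Then G_c(m,n) has the R_∞–property if and only if n + m is not congruent to 0 modulo |n−m|^{c−1}. Equivalently: G_c(m,n) fails to have the R_∞–property if and only if |n−m|^{c−1} divides n + m. -/
noncomputable section

def shiftN (c : ℕ) : Matrix (Fin c) (Fin c) ℤ :=
  Matrix.of fun i j => if (i : ℕ) = (j : ℕ) + 1 then 1 else 0

def Mphi (c : ℕ) (m n : ℤ) : Matrix (Fin c) (Fin c) ℤ := (n - m) • 1 + (-m) • shiftN c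

def Mpsi (c : ℕ) : Matrix (Fin c) (Fin c) ℤ := 1 + shiftN c

lemma commute_Mpsi_Mphi (c : ℕ) (m n : ℤ) : Commute (Mpsi c) (Mphi c m n) := by
  unfold Mpsi Mphi
  simp only [mul_add, add_mul, Commute, SemiconjBy]
  simp only [mul_smul_comm, smul_mul_assoc, one_mul, mul_one]
  abel

lemma det_Mpsi (c : ℕ) : (Mpsi c).det = 1 := by
  have h : (Mpsi c).BlockTriangular (OrderDual.toDual) := by
    intro i j hij
    simp only [Mpsi, shiftN, Matrix.add_apply, Matrix.one_apply, Matrix.of_apply]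
    have : i < j := hij
    rw [if_neg (by omega), if_neg (by omega)]
    simp
  rw [Matrix.det_of_lowerTriangular _ h]
  apply Finset.prod_eq_one
  intro i _
  simp [Mpsi, shiftN, Matrix.one_apply]

def MpsiUnit (c : ℕ) : (Matrix (Fin c) (Fin c) ℤ)ˣ :=
  ((Matrix.isUnit_iff_isUnit_det _).2 (by rw [det_Mpsi]; exact isUnit_one)).unit

lemma MpsiUnit_coe (c : ℕ) : (MpsiUnit c : Matrix (Fin c) (Fin c) ℤ) = Mpsi c :=
  IsUnit.unit_spec _

/-- ψ as an additive automorphism of ℤ^c. -/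
def psiEquiv (c : ℕ) : (Fin c → ℤ) ≃+ (Fin c → ℤ) where
  toFun := (Mpsi c).mulVec
  invFun := ((MpsiUnit c)⁻¹ : (Matrix (Fin c) (Fin c) ℤ)ˣ).val.mulVec
  left_inv := fun v => by
    rw [Matrix.mulVec_mulVec]
    rw [show ((MpsiUnit c)⁻¹ : (Matrix (Fin c) (Fin c) ℤ)ˣ).val * Mpsi c = 1 by
      rw [← MpsiUnit_coe]; exact Units.inv_mul _]
    exact Matrix.one_mulVec v
  right_inv := fun v => by
    rw [Matrix.mulVec_mulVec]
    rw [show Mpsi c * ((MpsiUnit c)⁻¹ : (Matrix (Fin c) (Fin c) ℤ)ˣ).val = 1 by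
      rw [← MpsiUnit_coe]; exact Units.mul_inv _]
    exact Matrix.one_mulVec v
  map_add' := fun x y => Matrix.mulVec_add _ x y

/-- The range of φ, as an additive subgroup of ℤ^c. -/
def phiRange (c : ℕ) (m n : ℤ) : AddSubgroup (Fin c → ℤ) :=
  (LinearMap.range (Mphi c m n).mulVecLin).toAddSubgroup

/-- The abelian group A_c(m,n) = ℤ^c / Im φ. -/
abbrev Ac (c : ℕ) (m n : ℤ) : Type := (Fin c → ℤ) ⧸ phiRange c m n

lemma map_phiRange (c : ℕ) (m n : ℤ) :
    (phiRange c m n).map (psiEquiv c : (Fin c → ℤ) →+ (Fin c → ℤ)) = phiRange c m n := by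
  have hcomm := commute_Mpsi_Mphi c m n
  ext x
  constructor
  · rintro ⟨y, ⟨z, rfl⟩, rfl⟩
    refine ⟨(Mpsi c).mulVec z, ?_⟩
    show (Mphi c m n).mulVec ((Mpsi c).mulVec z) = _
    show _ = (Mpsi c).mulVec ((Mphi c m n).mulVec z)
    rw [Matrix.mulVec_mulVec, Matrix.mulVec_mulVec, hcomm.eq]
  · rintro ⟨z, rfl⟩
    have hinv : Commute (((MpsiUnit c)⁻¹ : (Matrix (Fin c) (Fin c) ℤ)ˣ) : Matrix (Fin c) (Fin c) ℤ)
        (Mphi c m n) := by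
      have : Commute ((MpsiUnit c : Matrix (Fin c) (Fin c) ℤ)) (Mphi c m n) := by
        rw [MpsiUnit_coe]; exact hcomm
      exact this.units_inv_left
    refine ⟨(Mphi c m n).mulVec (((MpsiUnit c)⁻¹ :
      (Matrix (Fin c) (Fin c) ℤ)ˣ).val.mulVec z), ⟨_, rfl⟩, ?_⟩
    show (Mpsi c).mulVec _ = (Mphi c m n).mulVec z
    rw [Matrix.mulVec_mulVec, Matrix.mulVec_mulVec, hcomm.eq, mul_assoc,
      show Mpsi c * ((MpsiUnit c)⁻¹ : (Matrix (Fin c) (Fin c) ℤ)ˣ).val = 1 by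
        rw [← MpsiUnit_coe]; exact Units.mul_inv _, mul_one]


/-- The automorphism ψ induced on A_c(m,n). -/
def psiA (c : ℕ) (m n : ℤ) : Ac c m n ≃+ Ac c m n :=
  QuotientAddGroup.congr (phiRange c m n) (phiRange c m n) (psiEquiv c) (map_phiRange c m n)

/-- The action of ⟨t⟩ ≅ ℤ on A_c(m,n), with t⁻¹ a t = ψ(a). -/
def GcAct (c : ℕ) (m n : ℤ) : Multiplicative ℤ →* MulAut (Multiplicative (Ac c m n)) :=
  zpowersHom _ (AddEquiv.toMultiplicative (psiA c m n))⁻¹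

/-- The group G_c(m,n) = A_c(m,n) ⋊ ⟨t⟩. -/
abbrev Gc (c : ℕ) (m n : ℤ) : Type :=
  SemidirectProduct (Multiplicative (Ac c m n)) (Multiplicative ℤ) (GcAct c m n)

/-- The element t of G_c(m,n). -/
def tGen (c : ℕ) (m n : ℤ) : Gc c m n := SemidirectProduct.inr (Multiplicative.ofAdd 1)

/-- The image ē_i of the i-th standard basis vector in A_c(m,n). -/
def eA (c : ℕ) (m n : ℤ) (i : Fin c) : Ac c m n :=
  QuotientAddGroup.mk (Pi.single i 1)

/-- The element ē_i viewed in G_c(m,n). -/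
def eG (c : ℕ) (m n : ℤ) (i : Fin c) : Gc c m n :=
  SemidirectProduct.inl (Multiplicative.ofAdd (eA c m n i))

end

/-- The twisted conjugacy (Reidemeister) equivalence relation of an endomorphism `φ`:
`x ∼ y ↔ ∃ z, x = z * y * (φ z)⁻¹`. -/
def twistedConj {G : Type*} [Group G] (φ : G →* G) : Setoid G where
  r x y := ∃ z : G, x = z * y * (φ z)⁻¹
  iseqv := by
    constructor
    · exact fun x => ⟨1, by simp⟩
    · rintro x y ⟨z, rfl⟩
      exact ⟨z⁻¹, by simp [mul_assoc]⟩
    · rintro x y z ⟨u, rfl⟩ ⟨v, rfl⟩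
      exact ⟨u * v, by simp [mul_assoc]⟩

/-- A group `G` has the `R∞`–property if every automorphism has infinitely many
twisted conjugacy classes. -/
def HasRInfty (G : Type*) [Group G] : Prop :=
  ∀ φ : G ≃* G, Infinite (Quotient (twistedConj φ.toMonoidHom))

lemma det_Mphi (c : ℕ) (m n : ℤ) : (Mphi c m n).det = (n - m) ^ c := by
  have h : (Mphi c m n).BlockTriangular OrderDual.toDual := by
    intro i j hij
    have : i < j := hij
    simp only [Mphi, shiftN, Matrix.add_apply, Matrix.smul_apply, Matrix.one_apply,
      Matrix.of_apply]
    rw [if_neg (by omega), if_neg (by omega)]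
    simp
  rw [Matrix.det_of_isLowerTriangular _ h]
  simp only [Mphi, shiftN, Matrix.add_apply, Matrix.smul_apply, Matrix.one_apply_eq,
    Matrix.of_apply]
  simp

/-- The determinant of `φ` annihilates `A_c(m,n)`. -/
lemma pow_smul_Ac (c : ℕ) (m n : ℤ) (a : Ac c m n) : (n - m) ^ c • a = 0 := by
  induction a using QuotientAddGroup.induction_on with
  | H v =>
    rw [← QuotientAddGroup.mk_zsmul, QuotientAddGroup.eq_zero_iff]
    refine ⟨(Mphi c m n).adjugate.mulVec v, ?_⟩
    rw [Matrix.mulVecLin_apply, Matrix.mulVec_mulVec, Matrix.mul_adjugate, det_Mphi,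
      Matrix.smul_mulVec, Matrix.one_mulVec]

lemma smul_psiA (c : ℕ) (m n : ℤ) (a : Ac c m n) : m • psiA c m n a = n • a := by
  induction a using QuotientAddGroup.induction_on with
  | H v =>
    have hpsi : psiA c m n (v : Ac c m n) = (((Mpsi c).mulVec v : Fin c → ℤ) : Ac c m n) := rfl
    rw [hpsi, ← QuotientAddGroup.mk_zsmul, ← QuotientAddGroup.mk_zsmul, QuotientAddGroup.eq]
    refine ⟨v, ?_⟩
    rw [Matrix.mulVecLin_apply, Mphi, Mpsi, Matrix.add_mulVec, Matrix.add_mulVec,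
      Matrix.smul_mulVec, Matrix.smul_mulVec, Matrix.one_mulVec]
    module

lemma isCoprime_sub_pow {m n : ℤ} (h : Int.gcd m n = 1) (c k : ℕ) :
    IsCoprime ((n - m) ^ c) (m ^ k) := by
  have hmn : IsCoprime n m := (Int.isCoprime_iff_gcd_eq_one.2 h).symm
  have : IsCoprime (n + m * (-1)) m := hmn.add_mul_left_left (-1)
  rw [mul_neg_one, ← sub_eq_add_neg] at this
  exact this.pow

/-- The functional `v ↦ ∑ vᵢ m^(c-1-i) (n-m)^i` maps the image of `φ` into `(n-m)^c ℤ`. -/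
lemma pow_dvd_sum_of_mem_phiRange {c : ℕ} {m n : ℤ} {v : Fin c → ℤ} (hv : v ∈ phiRange c m n) :
    (n - m) ^ c ∣ ∑ i : Fin c, v i * (m ^ (c - 1 - (i : ℕ)) * (n - m) ^ (i : ℕ)) := by
  obtain ⟨w, rfl⟩ := hv
  set f : Fin c → ℤ := fun i => m ^ (c - 1 - (i : ℕ)) * (n - m) ^ (i : ℕ) with hf
  have hdot : ∑ i, (Mphi c m n).mulVecLin w i * f i = ∑ j, w j * Matrix.vecMul f (Mphi c m n) j := by
    have := Matrix.dotProduct_mulVec f (Mphi c m n) w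
    rw [dotProduct_comm, dotProduct_comm _ w] at this
    exact this
  rw [hdot]
  refine Finset.dvd_sum fun j _ => Dvd.dvd.mul_left ?_ _
  have hcol : Matrix.vecMul f (Mphi c m n) j =
      (n - m) * f j - m * ∑ i : Fin c, if (i : ℕ) = j + 1 then f i else 0 := by
    rw [Mphi, Matrix.vecMul_add, Matrix.vecMul_smul, Matrix.vecMul_smul, Matrix.vecMul_one]
    simp [Matrix.vecMul, dotProduct, shiftN, sub_eq_add_neg]
  rw [hcol]
  by_cases hj : (j : ℕ) + 1 < c
  · have hsum : (∑ i : Fin c, if (i : ℕ) = j + 1 then f i else 0) = f ⟨j + 1, hj⟩ := by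
      rw [Finset.sum_eq_single ⟨(j : ℕ) + 1, hj⟩]
      · simp
      · intro b _ hb
        exact if_neg fun hbj => hb (Fin.ext hbj)
      · simp
    have hexp : c - 1 - (j : ℕ) = c - 1 - ((j : ℕ) + 1) + 1 := by omega
    have hzero : (n - m) * f j - m * f ⟨j + 1, hj⟩ = 0 := by
      simp only [hf, hexp]
      ring
    rw [hsum, hzero]
    exact dvd_zero _
  · have hsum : (∑ i : Fin c, if (i : ℕ) = j + 1 then f i else 0) = 0 :=
      Finset.sum_eq_zero fun i _ => if_neg (by omega)
    have hjc : c = (j : ℕ) + 1 := by omega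
    have hdj : (n - m) ^ c = (n - m) ^ ((j : ℕ) + 1) := congrArg _ hjc
    rw [hsum, mul_zero, sub_zero, hdj, pow_succ']
    exact mul_dvd_mul_left _ (Dvd.intro_left _ rfl)

/-- The class of the first basis vector has order `|n-m|^c`. -/
lemma pow_dvd_of_smul_eA_eq_zero {c : ℕ} {m n : ℤ} (h : Int.gcd m n = 1) (hc : 0 < c) {k : ℤ}
    (hk : k • eA c m n ⟨0, hc⟩ = 0) : (n - m) ^ c ∣ k := by
  rw [eA, ← QuotientAddGroup.mk_zsmul, QuotientAddGroup.eq_zero_iff] at hk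
  have hdvd := pow_dvd_sum_of_mem_phiRange hk
  rw [Finset.sum_eq_single ⟨0, hc⟩] at hdvd
  · simp only [Pi.smul_apply, Pi.single_eq_same, smul_eq_mul, mul_one, pow_zero] at hdvd
    exact (isCoprime_sub_pow h c _).dvd_of_dvd_mul_right hdvd
  · intro b _ hb
    simp [Pi.single_eq_of_ne hb]
  · simp

lemma pow_dvd_sq_sub_sq_iff {m n : ℤ} (hmn : m ≠ n) {c : ℕ} (hc : 1 ≤ c) :
    (n - m) ^ c ∣ n ^ 2 - m ^ 2 ↔ ((n - m).natAbs : ℤ) ^ (c - 1) ∣ n + m := by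
  obtain ⟨c, rfl⟩ := Nat.exists_eq_add_of_le' hc
  rw [Nat.add_sub_cancel, Int.natCast_natAbs, ← abs_pow, abs_dvd, pow_succ',
    show n ^ 2 - m ^ 2 = (n - m) * (n + m) by ring]
  exact mul_dvd_mul_iff_left (sub_ne_zero.2 hmn.symm)

lemma psiA_psiA_of_dvd {c : ℕ} {m n : ℤ} (h : Int.gcd m n = 1)
    (hdvd : (n - m) ^ c ∣ n ^ 2 - m ^ 2) (a : Ac c m n) : psiA c m n (psiA c m n a) = a := by
  rw [← sub_eq_zero]
  set b := psiA c m n (psiA c m n a) - a with hb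
  have hm : m ^ 2 • b = 0 := by
    obtain ⟨k, hk⟩ := hdvd
    have : m ^ 2 • psiA c m n (psiA c m n a) = n ^ 2 • a := by
      rw [sq, sq, mul_smul, smul_psiA, smul_comm, smul_psiA, mul_smul]
    rw [hb, zsmul_sub, this, sub_eq_add_neg, ← sub_zsmul, hk, mul_comm, mul_zsmul, pow_smul_Ac, zsmul_zero]
  obtain ⟨x, y, hxy⟩ := isCoprime_sub_pow h c 2
  rw [← one_zsmul b, ← hxy, add_zsmul, mul_zsmul, mul_zsmul, hm, pow_smul_Ac, zsmul_zero,
    zsmul_zero, add_zero]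

lemma finite_Ac {c : ℕ} {m n : ℤ} (hmn : m ≠ n) : Finite (Ac c m n) := by
  refine AddCommGroup.finite_of_fg_isAddTorsion _ ?_
  intro a
  rw [isOfFinAddOrder_iff_zsmul_eq_zero]
  exact ⟨(n - m) ^ c, pow_ne_zero _ (sub_ne_zero.2 hmn.symm), pow_smul_Ac c m n a⟩

lemma tGen_inv_mul_inl_mul_tGen (c : ℕ) (m n : ℤ) (a : Ac c m n) :
    (tGen c m n)⁻¹ * SemidirectProduct.inl (Multiplicative.ofAdd a) * tGen c m n =
      SemidirectProduct.inl (Multiplicative.ofAdd (psiA c m n a)) := by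
  have := SemidirectProduct.inl_aut_inv (φ := GcAct c m n) (Multiplicative.ofAdd 1)
    (Multiplicative.ofAdd a)
  rw [map_inv] at this
  rw [tGen, ← this]
  simp [GcAct, zpowersHom_apply]

/-- An endomorphism of `G_c(m,n)` preserves the finite subgroup `A_c(m,n)`. -/
lemma right_map_inl {c : ℕ} {m n : ℤ} (hmn : m ≠ n) (f : Gc c m n →* Gc c m n) (a : Ac c m n) :
    (f (SemidirectProduct.inl (Multiplicative.ofAdd a))).right = 1 := by
  have hpow : (SemidirectProduct.rightHom (f (SemidirectProduct.inl (Multiplicative.ofAdd a)))) ^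
      ((n - m) ^ c) = 1 := by
    rw [← map_zpow, ← map_zpow, ← map_zpow, ← ofAdd_zsmul, pow_smul_Ac]
    simp
  have := congrArg Multiplicative.toAdd hpow
  rw [toAdd_zpow, toAdd_one, smul_eq_mul] at this
  exact Multiplicative.toAdd.injective
    ((mul_eq_zero.1 this).resolve_left (pow_ne_zero _ (sub_ne_zero.2 hmn.symm)))

lemma right_map {c : ℕ} {m n : ℤ} (hmn : m ≠ n) (f : Gc c m n →* Gc c m n) (g : Gc c m n) :
    (f g).right = (f (tGen c m n)).right ^ (Multiplicative.toAdd g.right) := by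
  have hinr : SemidirectProduct.inr g.right = tGen c m n ^ (Multiplicative.toAdd g.right) := by
    rw [tGen, ← map_zpow, ← ofAdd_zsmul, smul_eq_mul, mul_one, ofAdd_toAdd]
  have hleft := right_map_inl hmn f (Multiplicative.toAdd g.left)
  rw [ofAdd_toAdd] at hleft
  conv_lhs => rw [← SemidirectProduct.inl_left_mul_inr_right g, hinr, map_mul, map_zpow]
  rw [SemidirectProduct.mul_right, hleft, one_mul]
  exact map_zpow SemidirectProduct.rightHom _ _

/-- An automorphism of `G_c(m,n)` induces `±1` on the quotient `⟨t⟩`. -/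
lemma toAdd_right_map_tGen {c : ℕ} {m n : ℤ} (hmn : m ≠ n) (f : Gc c m n ≃* Gc c m n) :
    Multiplicative.toAdd (f (tGen c m n)).right = 1 ∨
      Multiplicative.toAdd (f (tGen c m n)).right = -1 := by
  have := congrArg Multiplicative.toAdd (right_map hmn f.toMonoidHom (f.symm (tGen c m n)))
  rw [toAdd_zpow, smul_eq_mul] at this
  simp only [MulEquiv.toMonoidHom_eq_coe, MonoidHom.coe_coe, MulEquiv.apply_symm_apply] at this
  refine Int.isUnit_iff.1
    (IsUnit.of_mul_eq_one_right (Multiplicative.toAdd (f.symm (tGen c m n)).right) ?_)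
  rw [← this]
  simp [tGen]

/-- An automorphism inverting the quotient `⟨t⟩` forces `n² - m²` to annihilate `A_c(m,n)`. -/
lemma sq_sub_sq_smul_eq_zero {c : ℕ} {m n : ℤ} (hmn : m ≠ n) (f : Gc c m n ≃* Gc c m n)
    (hf : Multiplicative.toAdd (f (tGen c m n)).right = -1) (a : Ac c m n) :
    (n ^ 2 - m ^ 2) • a = 0 := by
  let ι : Multiplicative (Ac c m n) →* Gc c m n := SemidirectProduct.inl
  have hι : Function.Injective ι := SemidirectProduct.inl_injective
  let α : Ac c m n → Ac c m n := fun x =>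
    Multiplicative.toAdd (f (ι (Multiplicative.ofAdd x))).left
  have hα (x : Ac c m n) : f (ι (Multiplicative.ofAdd x)) = ι (Multiplicative.ofAdd (α x)) :=
    SemidirectProduct.ext rfl (right_map_inl hmn f.toMonoidHom x)
  have hα_smul (k : ℤ) (x : Ac c m n) : α (k • x) = k • α x := by
    apply Multiplicative.ofAdd.injective
    apply hι
    rw [← hα, ofAdd_zsmul, map_zpow, map_zpow, hα, ofAdd_zsmul, map_zpow]
  have hconj (x : Ac c m n) :
      (tGen c m n)⁻¹ * ι (Multiplicative.ofAdd x) * tGen c m n =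
        ι (Multiplicative.ofAdd (psiA c m n x)) :=
    tGen_inv_mul_inl_mul_tGen c m n x
  obtain ⟨b, hb⟩ : ∃ b, f (tGen c m n) = ι b * (tGen c m n)⁻¹ := by
    refine ⟨(f (tGen c m n)).left, ?_⟩
    refine SemidirectProduct.ext ?_ ?_
    · simp [ι, tGen]
    · simp only [ι, tGen, SemidirectProduct.mul_right, SemidirectProduct.right_inl, one_mul,
        SemidirectProduct.inv_right, SemidirectProduct.right_inr]
      exact Multiplicative.toAdd.injective hf
  have htwist (x : Ac c m n) : psiA c m n (α (psiA c m n x)) = α x := by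
    apply Multiplicative.ofAdd.injective
    apply hι
    have hcomm : b⁻¹ * Multiplicative.ofAdd (α x) * b = Multiplicative.ofAdd (α x) := by
      rw [mul_comm, ← mul_assoc, mul_inv_cancel, one_mul]
    rw [← hconj, ← hα, ← hconj, map_mul, map_mul, map_inv, hα, hb]
    nth_rewrite 2 [← hcomm]
    rw [map_mul, map_mul, map_inv]
    group
  have hzero : α ((n ^ 2 - m ^ 2) • a) = 0 := by
    have hsq : n ^ 2 • α a = m ^ 2 • α a := by
      rw [sq, sq, mul_zsmul, mul_zsmul]
      conv_rhs => rw [← htwist, smul_psiA, zsmul_comm, ← hα_smul m, smul_psiA, hα_smul]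
    rw [hα_smul, sub_smul, hsq, sub_self]
  apply Multiplicative.ofAdd.injective
  apply hι
  apply f.injective
  rw [hα, hzero]
  simp

lemma infinite_quotient_twistedConj {c : ℕ} {m n : ℤ} (hmn : m ≠ n) (f : Gc c m n →* Gc c m n)
    (hf : Multiplicative.toAdd (f (tGen c m n)).right = 1) :
    Infinite (Quotient (twistedConj f)) := by
  have hright (g : Gc c m n) : (f g).right = g.right := by
    apply Multiplicative.toAdd.injective
    rw [right_map hmn, toAdd_zpow, hf, smul_eq_mul, mul_one]
  let p : Quotient (twistedConj f) → Multiplicative ℤ := Quotient.lift (fun g => g.right) (by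
    rintro x y ⟨z, rfl⟩
    simp [hright, mul_comm z.right])
  refine Infinite.of_surjective p fun k => ⟨Quotient.mk _ (SemidirectProduct.inr k), ?_⟩
  simp [p]

/-- If `ψ` is an involution, inverting `t` extends the identity of `A_c(m,n)`. -/
lemma exists_mulEquiv_inverting {c : ℕ} {m n : ℤ}
    (hpsi : ∀ a : Ac c m n, psiA c m n (psiA c m n a) = a) :
    ∃ f : Gc c m n ≃* Gc c m n, ∀ g, (f g).right = g.right⁻¹ := by
  have hinv : ∀ k : Multiplicative ℤ, GcAct c m n k⁻¹ = GcAct c m n k := by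
    intro k
    have hself : (AddEquiv.toMultiplicative (psiA c m n) : MulAut (Multiplicative (Ac c m n)))⁻¹ =
        AddEquiv.toMultiplicative (psiA c m n) := by
      rw [inv_eq_iff_mul_eq_one]
      ext a
      exact hpsi a
    rw [GcAct, map_inv, zpowersHom_apply, ← inv_zpow, inv_inv, hself]
  refine ⟨SemidirectProduct.congr (MulEquiv.refl _) (MulEquiv.inv _) fun k => ?_, fun g => rfl⟩
  ext a
  simp [hinv]

lemma finite_quotient_twistedConj {c : ℕ} {m n : ℤ} (hmn : m ≠ n) (f : Gc c m n →* Gc c m n)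
    (hf : ∀ g, (f g).right = g.right⁻¹) : Finite (Quotient (twistedConj f)) := by
  have := finite_Ac (c := c) hmn
  let p : Multiplicative (Ac c m n) × Fin 2 → Quotient (twistedConj f) := fun x =>
    Quotient.mk _ ⟨x.1, Multiplicative.ofAdd ((x.2 : ℕ) : ℤ)⟩
  refine Finite.of_surjective p fun q => ?_
  induction q using Quotient.inductionOn with
  | h g =>
    obtain ⟨r, j, hrj⟩ : ∃ (r : Fin 2) (j : ℤ), Multiplicative.toAdd g.right = r + 2 * j := by
      refine ⟨⟨(Multiplicative.toAdd g.right % 2).toNat, by omega⟩,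
        Multiplicative.toAdd g.right / 2, ?_⟩
      simp only
      omega
    set z : Gc c m n := SemidirectProduct.inr (Multiplicative.ofAdd (-j)) with hz
    refine ⟨((z * g * (f z)⁻¹).left, r), Quotient.sound ⟨z, ?_⟩⟩
    refine SemidirectProduct.ext rfl ?_
    apply Multiplicative.toAdd.injective
    simp only [SemidirectProduct.mul_right, SemidirectProduct.inv_right, hf, inv_inv, toAdd_mul,
      hrj, hz, SemidirectProduct.right_inr, toAdd_ofAdd]
    ring

/-- For `gcd(m,n) = 1`, `m ≠ n` and `c ≥ 1`: `G_c(m,n)` has the `R∞`–property iff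
`|n-m|^{c-1}` does not divide `n + m`. -/
theorem stmt12 (m n : ℤ) (h : Int.gcd m n = 1) (hmn : m ≠ n) (c : ℕ) (hc : 1 ≤ c) :
    HasRInfty (Gc c m n) ↔ ¬ ((((n - m).natAbs : ℤ) ^ (c - 1)) ∣ (n + m)) := by
  rw [← pow_dvd_sq_sub_sq_iff hmn hc]
  constructor
  · intro hR hdvd
    obtain ⟨f, hf⟩ := exists_mulEquiv_inverting (psiA_psiA_of_dvd h hdvd)
    have := hR f
    exact not_finite_iff_infinite.2 this (finite_quotient_twistedConj hmn f.toMonoidHom hf)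
  · intro hdvd f
    refine infinite_quotient_twistedConj hmn f.toMonoidHom
      ((toAdd_right_map_tGen hmn f).resolve_right fun hf => hdvd ?_)
    exact pow_dvd_of_smul_eA_eq_zero h hc (sq_sub_sq_smul_eq_zero hmn f hf _)
end

section
/- Let m, n be integers with 0 < m ≤ |n| and m ≠ n, let d = gcd(m,n) and let c ≥ 1. Then the subgroup d·A_c(m,n) of A_c(m,n) is invariant under the automorphism ψ, so (d·A_c(m,n)) ⋊ ⟨t⟩ is a subgroup of G_c(m,n), and this subgroup is isomorphic to G_c(m/d, n/d). -/
lemma Mphi_mul (c : ℕ) (d m n : ℤ) : Mphi c (d * m) (d * n) = d • Mphi c m n := by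
  simp only [Mphi, smul_add, smul_smul, mul_sub, mul_neg]

lemma smul_mem_phiRange_mul_iff (c : ℕ) {d : ℤ} (hd : d ≠ 0) (m n : ℤ) (v : Fin c → ℤ) :
    d • v ∈ phiRange c (d * m) (d * n) ↔ v ∈ phiRange c m n := by
  simp only [phiRange, Submodule.mem_toAddSubgroup, LinearMap.mem_range, Matrix.mulVecLin_apply,
    Mphi_mul, Matrix.smul_mulVec]
  exact exists_congr fun w => (smul_right_injective _ hd).eq_iff

/-- Multiplication by `d` on `ℤ^c` induces a homomorphism `A_c(m,n) → A_c(dm,dn)`. -/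
noncomputable def scaleA (c : ℕ) {d : ℤ} (hd : d ≠ 0) (m n : ℤ) :
    Ac c m n →+ Ac c (d * m) (d * n) :=
  QuotientAddGroup.map _ _ (zsmulAddGroupHom d) fun v hv =>
    (smul_mem_phiRange_mul_iff c hd m n v).2 hv

lemma scaleA_mk (c : ℕ) {d : ℤ} (hd : d ≠ 0) (m n : ℤ) (v : Fin c → ℤ) :
    scaleA c hd m n (QuotientAddGroup.mk v) = QuotientAddGroup.mk (d • v) := rfl

lemma psiA_mk (c : ℕ) (m n : ℤ) (v : Fin c → ℤ) :
    psiA c m n (QuotientAddGroup.mk v) = QuotientAddGroup.mk (psiEquiv c v) := rfl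

lemma scaleA_injective (c : ℕ) {d : ℤ} (hd : d ≠ 0) (m n : ℤ) :
    Function.Injective (scaleA c hd m n) := by
  rw [injective_iff_map_eq_zero]
  intro x
  induction x using QuotientAddGroup.induction_on with | H v
  rw [scaleA_mk, QuotientAddGroup.eq_zero_iff, QuotientAddGroup.eq_zero_iff,
    smul_mem_phiRange_mul_iff c hd]
  exact id

lemma range_scaleA (c : ℕ) {d : ℤ} (hd : d ≠ 0) (m n : ℤ) :
    (scaleA c hd m n).range =
      (zsmulAddGroupHom d : Ac c (d * m) (d * n) →+ Ac c (d * m) (d * n)).range := by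
  ext x
  constructor
  · rintro ⟨y, rfl⟩
    induction y using QuotientAddGroup.induction_on with | H v
    exact ⟨QuotientAddGroup.mk v, rfl⟩
  · rintro ⟨y, rfl⟩
    induction y using QuotientAddGroup.induction_on with | H v
    exact ⟨QuotientAddGroup.mk v, rfl⟩

lemma scaleA_psiA (c : ℕ) {d : ℤ} (hd : d ≠ 0) (m n : ℤ) (x : Ac c m n) :
    scaleA c hd m n (psiA c m n x) = psiA c (d * m) (d * n) (scaleA c hd m n x) := by
  induction x using QuotientAddGroup.induction_on with | H v
  rw [psiA_mk, scaleA_mk, scaleA_mk, psiA_mk, map_zsmul]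

lemma MonoidHom.comp_zpow_mulAut {G H : Type*} [Group G] [Group H] {f : G →* H}
    {a : MulAut G} {b : MulAut H} (h : ∀ x, f (a x) = b (f x)) (k : ℤ) (x : G) :
    f ((a ^ k) x) = (b ^ k) (f x) := by
  induction k generalizing x with
  | zero => simp
  | succ k ih => rw [zpow_add_one, zpow_add_one, MulAut.mul_apply, MulAut.mul_apply, ih, h]
  | pred k ih =>
    have h' : f (a⁻¹ x) = b⁻¹ (f x) := by
      rw [MulAut.inv_apply, MulAut.inv_apply, MulEquiv.eq_symm_apply, ← h,
        MulEquiv.apply_symm_apply]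
    rw [zpow_sub_one, zpow_sub_one, MulAut.mul_apply, MulAut.mul_apply, ih, h']

lemma scaleA_GcAct (c : ℕ) {d : ℤ} (hd : d ≠ 0) (m n : ℤ) (k : Multiplicative ℤ)
    (x : Multiplicative (Ac c m n)) :
    (scaleA c hd m n).toMultiplicative (GcAct c m n k x) =
      GcAct c (d * m) (d * n) k ((scaleA c hd m n).toMultiplicative x) := by
  simp only [GcAct, zpowersHom_apply, inv_zpow']
  exact MonoidHom.comp_zpow_mulAut (f := (scaleA c hd m n).toMultiplicative)
    (a := AddEquiv.toMultiplicative (psiA c m n))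
    (b := AddEquiv.toMultiplicative (psiA c (d * m) (d * n))) (scaleA_psiA c hd m n) _ x

/-- The homomorphism `G_c(m,n) → G_c(dm,dn)` that is `scaleA` on `A_c(m,n)` and fixes `t`. -/
noncomputable def scaleG (c : ℕ) {d : ℤ} (hd : d ≠ 0) (m n : ℤ) :
    Gc c m n →* Gc c (d * m) (d * n) :=
  SemidirectProduct.map (scaleA c hd m n).toMultiplicative (MonoidHom.id _) fun k =>
    MonoidHom.ext (scaleA_GcAct c hd m n k)

lemma scaleG_injective (c : ℕ) {d : ℤ} (hd : d ≠ 0) (m n : ℤ) :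
    Function.Injective (scaleG c hd m n) := by
  intro x y h
  have hl := congrArg SemidirectProduct.left h
  have hr := congrArg SemidirectProduct.right h
  exact SemidirectProduct.ext (scaleA_injective c hd m n hl) hr

lemma mem_range_scaleG (c : ℕ) {d : ℤ} (hd : d ≠ 0) (m n : ℤ) (g : Gc c (d * m) (d * n)) :
    g ∈ (scaleG c hd m n).range ↔ Multiplicative.toAdd g.left ∈ (scaleA c hd m n).range := by
  constructor
  · rintro ⟨x, rfl⟩
    exact ⟨Multiplicative.toAdd x.left, rfl⟩
  · rintro ⟨x, hx⟩
    exact ⟨⟨Multiplicative.ofAdd x, g.right⟩, SemidirectProduct.ext hx rfl⟩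

/-- For `0 < m ≤ |n|`, `m ≠ n`, `d = gcd(m,n)` and `c ≥ 1`: the subgroup `d·A_c(m,n)`
(the range of multiplication by `d`) is invariant under `ψ`, and the subgroup
`(d·A_c(m,n)) ⋊ ⟨t⟩` of `G_c(m,n)` (the subgroup of elements whose `A_c(m,n)`-component
lies in `d·A_c(m,n)`) is isomorphic to `G_c(m/d, n/d)`. -/
theorem stmt17 (m n : ℤ) (hm : 0 < m) (hmabs : m ≤ |n|) (hmn : m ≠ n) (c : ℕ)
    (hc : 1 ≤ c) :
    (∀ x ∈ (zsmulAddGroupHom (Int.gcd m n : ℤ) : Ac c m n →+ Ac c m n).range,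
        psiA c m n x ∈ (zsmulAddGroupHom (Int.gcd m n : ℤ) : Ac c m n →+ Ac c m n).range) ∧
    ∃ S : Subgroup (Gc c m n),
      (S : Set (Gc c m n)) = {g : Gc c m n | Multiplicative.toAdd g.left ∈
          (zsmulAddGroupHom (Int.gcd m n : ℤ) : Ac c m n →+ Ac c m n).range} ∧
      Nonempty (S ≃* Gc c (m / (Int.gcd m n : ℤ)) (n / (Int.gcd m n : ℤ))) := by
  refine ⟨?_, ?_⟩
  · rintro _ ⟨y, rfl⟩
    exact ⟨psiA c m n y, (map_zsmul (psiA c m n) _ y).symm⟩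
  have hd : (Int.gcd m n : ℤ) ≠ 0 := by
    exact_mod_cast Int.gcd_ne_zero_left hm.ne'
  have hm' : (Int.gcd m n : ℤ) * (m / (Int.gcd m n : ℤ)) = m :=
    Int.mul_ediv_cancel' (Int.gcd_dvd_left m n)
  have hn' : (Int.gcd m n : ℤ) * (n / (Int.gcd m n : ℤ)) = n :=
    Int.mul_ediv_cancel' (Int.gcd_dvd_right m n)
  generalize (Int.gcd m n : ℤ) = d at *
  generalize m / d = m' at *
  generalize n / d = n' at *
  subst hm' hn'
  refine ⟨(scaleG c hd m' n').range, ?_,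
    ⟨(MonoidHom.ofInjective (scaleG_injective c hd m' n')).symm⟩⟩
  ext g
  rw [SetLike.mem_coe, mem_range_scaleG, range_scaleA, Set.mem_ofPred_eq]
end
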